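/- For every integer n ≥ 3, the graph Γ_{C_n} is cubic (3-regular) and its automorphism group is isomorphic to the cyclic group of order n; it is generated by the automorphism sending each vertex (x, i) to (x, i+1). -/

import Mathlib

/-- The graph `Γ_{C_n}` on vertex set `{a,b,c,d,e,f} × (ℤ/nℤ)` (the labels
`a,b,c,d,e,f` are encoded as `0,1,2,3,4,5 : Fin 6`), with edges, for every `i`:
`{a_i,b_i}, {a_i,e_i}, {a_i,f_i}, {b_i,f_i}, {c_i,d_i}, {c_i,f_i}, {c_i,e_i},
{e_i,b_{i+1}}, {d_i,d_{i+1}}`. -/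
def cnGraph (n : ℕ) : SimpleGraph (Fin 6 × ZMod n) :=
  SimpleGraph.fromEdgeSet (⋃ i : ZMod n,
    {s((0, i), (1, i)), s((0, i), (4, i)), s((0, i), (5, i)), s((1, i), (5, i)),
     s((2, i), (3, i)), s((2, i), (5, i)), s((2, i), (4, i)),
     s((4, i), (1, i + 1)), s((3, i), (3, i + 1))})

lemma cn_adj (n : ℕ) (h1 : (1 : ZMod n) ≠ 0) (x y : Fin 6) (i j : ZMod n) :
    (cnGraph n).Adj (x, i) (y, j) ↔
      (x = 0 ∧ (y = 1 ∧ j = i ∨ y = 4 ∧ j = i ∨ y = 5 ∧ j = i)) ∨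
      (x = 1 ∧ (y = 0 ∧ j = i ∨ y = 5 ∧ j = i ∨ y = 4 ∧ j = i - 1)) ∨
      (x = 2 ∧ (y = 3 ∧ j = i ∨ y = 5 ∧ j = i ∨ y = 4 ∧ j = i)) ∨
      (x = 3 ∧ (y = 2 ∧ j = i ∨ y = 3 ∧ j = i - 1 ∨ y = 3 ∧ j = i + 1)) ∨
      (x = 4 ∧ (y = 0 ∧ j = i ∨ y = 2 ∧ j = i ∨ y = 1 ∧ j = i + 1)) ∨
      (x = 5 ∧ (y = 0 ∧ j = i ∨ y = 1 ∧ j = i ∨ y = 2 ∧ j = i)) := by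
  have e1 : ∀ a b : ZMod n, a = b - 1 ↔ b = a + 1 := by
    intro a b; constructor <;> rintro rfl <;> ring
  unfold cnGraph
  simp only [SimpleGraph.fromEdgeSet_adj, Set.mem_iUnion, Set.mem_insert_iff,
    Set.mem_singleton_iff, Sym2.eq_iff, Prod.mk.injEq, ne_eq]
  constructor
  · rintro ⟨⟨k, h⟩, hne⟩
    rcases h with h | h | h | h | h | h | h | h | h <;>
    rcases h with ⟨⟨rfl, rfl⟩, rfl, rfl⟩ | ⟨⟨rfl, rfl⟩, rfl, rfl⟩ <;> simp
  · rintro (⟨rfl, h⟩ | ⟨rfl, h⟩ | ⟨rfl, h⟩ | ⟨rfl, h⟩ | ⟨rfl, h⟩ | ⟨rfl, h⟩) <;>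
    rcases h with ⟨rfl, rfl⟩ | ⟨rfl, rfl⟩ | ⟨rfl, rfl⟩ <;>
    refine ⟨?_, by simp [h1, e1]⟩ <;>
    first
    | (refine ⟨_, ?_⟩; simp; done)
    | (refine ⟨i, ?_⟩; simp; done)
    | (refine ⟨j, ?_⟩; simp; done)
    | (refine ⟨i - 1, ?_⟩; simp; done)

/-- triangle a b f and four-cycle a e c f -/
def CnConf (n : ℕ) (a b f e c : Fin 6 × ZMod n) : Prop :=
  (cnGraph n).Adj a b ∧ (cnGraph n).Adj a f ∧ (cnGraph n).Adj f b ∧ (cnGraph n).Adj a e ∧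
  (cnGraph n).Adj f c ∧ (cnGraph n).Adj e c ∧ b ≠ e ∧ b ≠ c ∧ a ≠ c ∧ e ≠ f

lemma cn_conf (n : ℕ) (h1 : (1 : ZMod n) ≠ 0) (h2 : (2 : ZMod n) ≠ 0)
    (a b f e c : Fin 6 × ZMod n) (h : CnConf n a b f e c) :
    ∃ i, b = (1, i) ∧ ((a = (0, i) ∧ f = (5, i) ∧ e = (4, i) ∧ c = (2, i)) ∨
      (a = (5, i) ∧ f = (0, i) ∧ e = (2, i) ∧ c = (4, i))) := by
  have e0 : ∀ x : ZMod n, x = x - 1 ↔ False := by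
    intro x
    simp only [iff_false]
    intro h
    apply h1
    linear_combination h
  obtain ⟨a, i⟩ := a
  obtain ⟨b, ib⟩ := b
  obtain ⟨f, jf⟩ := f
  obtain ⟨e, ie⟩ := e
  obtain ⟨c, ic⟩ := c
  obtain ⟨hab, haf, hfb, hae, hfc, hec, n1, n2, n3, n4⟩ := h
  rw [cn_adj n h1] at hab haf hfb hae hfc hec
  rcases hab with ⟨rfl, h⟩ | ⟨rfl, h⟩ | ⟨rfl, h⟩ | ⟨rfl, h⟩ | ⟨rfl, h⟩ | ⟨rfl, h⟩ <;>
  rcases h with ⟨rfl, rfl⟩ | ⟨rfl, rfl⟩ | ⟨rfl, rfl⟩ <;>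
  simp at haf <;>
  rcases haf with ⟨rfl, rfl⟩ | ⟨rfl, rfl⟩ | ⟨rfl, rfl⟩ <;>
  simp at hfb <;>
  simp at hae <;>
  rcases hae with ⟨rfl, rfl⟩ | ⟨rfl, rfl⟩ | ⟨rfl, rfl⟩ <;>
  simp at n1 n4 <;>
  simp at hfc <;>
  rcases hfc with ⟨rfl, rfl⟩ | ⟨rfl, rfl⟩ | ⟨rfl, rfl⟩ <;>
  simp [e0] at n2 n3 hec ⊢ <;> grind

lemma cn_conf_map (n : ℕ) (φ : cnGraph n ≃g cnGraph n) (a b f e c : Fin 6 × ZMod n)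
    (h : CnConf n a b f e c) : CnConf n (φ a) (φ b) (φ f) (φ e) (φ c) := by
  unfold CnConf at *
  simpa [SimpleGraph.Iso.map_adj_iff] using h

lemma cn_conf_std (n : ℕ) (h1 : (1 : ZMod n) ≠ 0) (i : ZMod n) :
    CnConf n (0, i) (1, i) (5, i) (4, i) (2, i) := by
  unfold CnConf
  simp [cn_adj n h1]

lemma cn_aut (n : ℕ) (h1 : (1 : ZMod n) ≠ 0) (h2 : (2 : ZMod n) ≠ 0)
    (φ : cnGraph n ≃g cnGraph n) (i : ZMod n) :
    ∃ j, (∀ x, φ (x, i) = (x, j)) ∧ φ (1, i + 1) = (1, j + 1) := by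
  obtain ⟨j, hb, h⟩ := cn_conf n h1 h2 _ _ _ _ _ (cn_conf_map n φ _ _ _ _ _ (cn_conf_std n h1 i))
  obtain ⟨k, hb', -⟩ := cn_conf n h1 h2 _ _ _ _ _
    (cn_conf_map n φ _ _ _ _ _ (cn_conf_std n h1 (i + 1)))
  have hadj : (cnGraph n).Adj (φ (4, i)) (φ (1, i + 1)) := by
    rw [SimpleGraph.Iso.map_adj_iff, cn_adj n h1]; simp
  have hcd : (cnGraph n).Adj (φ (2, i)) (φ (3, i)) := by
    rw [SimpleGraph.Iso.map_adj_iff, cn_adj n h1]; simp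
  have d1 : φ (3, i) ≠ φ (5, i) := by simp
  have d2 : φ (3, i) ≠ φ (4, i) := by simp
  rcases h with ⟨ha, hf, he, hc⟩ | ⟨ha, hf, he, hc⟩
  · rw [he, hb', cn_adj n h1] at hadj
    simp at hadj
    refine ⟨j, ?_, by rw [hb', hadj]⟩
    have hd : φ (3, i) = (3, j) := by
      rw [hc] at hcd
      rw [hf] at d1
      rw [he] at d2
      generalize φ (3, i) = w at *
      obtain ⟨y, l⟩ := w
      rw [cn_adj n h1] at hcd
      simp at hcd d1 d2 ⊢
      grind
    intro x
    fin_cases x <;> assumption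
  · rw [he, hb', cn_adj n h1] at hadj
    simp at hadj

/-- rotation by k -/
def cnRot (n : ℕ) (h1 : (1 : ZMod n) ≠ 0) (k : ZMod n) : cnGraph n ≃g cnGraph n where
  toEquiv := (Equiv.refl (Fin 6)).prodCongr (Equiv.addRight k)
  map_rel_iff' := by
    rintro ⟨x, i⟩ ⟨y, j⟩
    have e1 : j + k = i + k - 1 ↔ j = i - 1 := by
      rw [show i + k - 1 = (i - 1) + k by ring, add_left_inj]
    have e2 : j + k = i + k + 1 ↔ j = i + 1 := by
      rw [show i + k + 1 = (i + 1) + k by ring, add_left_inj]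
    simp [cn_adj n h1, e1, e2]

lemma cnRot_apply (n : ℕ) (h1 : (1 : ZMod n) ≠ 0) (k : ZMod n) (v : Fin 6 × ZMod n) :
    cnRot n h1 k v = (v.1, v.2 + k) := rfl

lemma cn_aut_eq (n : ℕ) [NeZero n] (h1 : (1 : ZMod n) ≠ 0) (h2 : (2 : ZMod n) ≠ 0)
    (φ : cnGraph n ≃g cnGraph n) : ∃ k, φ = cnRot n h1 k := by
  choose j hj hj' using cn_aut n h1 h2 φ
  have hs : ∀ i, j (i + 1) = j i + 1 := by
    intro i
    have := hj' i
    rw [hj] at this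
    simpa using this
  have hm : ∀ m : ℕ, j (m : ZMod n) = m + j 0 := by
    intro m
    induction m with
    | zero => simp
    | succ m ih => push_cast; rw [hs, ih]; ring
  refine ⟨j 0, ?_⟩
  ext1 ⟨x, i⟩
  rw [cnRot_apply, hj]
  have := hm i.val
  rw [ZMod.natCast_zmod_val] at this
  simp [this]

/-- rotations as a group isomorphism -/
noncomputable def cnEquiv (n : ℕ) [NeZero n] (h1 : (1 : ZMod n) ≠ 0) (h2 : (2 : ZMod n) ≠ 0) :
    Multiplicative (ZMod n) ≃* (cnGraph n ≃g cnGraph n) :=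
  MulEquiv.ofBijective
    (MonoidHom.mk' (fun k => cnRot n h1 k.toAdd) (by
      intro a b
      ext1 v
      change cnRot n h1 _ v = cnRot n h1 _ (cnRot n h1 _ v)
      simp only [cnRot_apply, toAdd_mul, Prod.mk.injEq, true_and]
      ring))
    ⟨by
      intro a b h
      have := congrArg (fun φ : cnGraph n ≃g cnGraph n => φ (0, 0)) h
      simpa [cnRot_apply] using this,
    by
      intro φ
      obtain ⟨k, rfl⟩ := cn_aut_eq n h1 h2 φ
      exact ⟨Multiplicative.ofAdd k, rfl⟩⟩

open scoped Classical in
lemma cn_reg (n : ℕ) [NeZero n] (h1 : (1 : ZMod n) ≠ 0) (h2 : (2 : ZMod n) ≠ 0) :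
    (cnGraph n).IsRegularOfDegree 3 := by
  rintro ⟨x, i⟩
  have key : ∀ u v w : Fin 6 × ZMod n, u ≠ v → u ≠ w → v ≠ w →
      (∀ y, (cnGraph n).Adj (x, i) y ↔ y = u ∨ y = v ∨ y = w) →
      (cnGraph n).degree (x, i) = 3 := by
    intro u v w a b c h
    rw [← SimpleGraph.card_neighborFinset_eq_degree, Finset.card_eq_three]
    refine ⟨u, v, w, a, b, c, ?_⟩
    ext y
    simp [h]
  have h3 : i - 1 ≠ i + 1 := by
    intro h
    apply h2
    linear_combination -h
  fin_cases x
  · refine key (1, i) (4, i) (5, i) (by simp) (by simp) (by simp) ?_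
    rintro ⟨y, j⟩; simp [cn_adj n h1]
  · refine key (0, i) (5, i) (4, i - 1) (by simp) (by simp) (by simp) ?_
    rintro ⟨y, j⟩; simp [cn_adj n h1]
  · refine key (3, i) (5, i) (4, i) (by simp) (by simp) (by simp) ?_
    rintro ⟨y, j⟩; simp [cn_adj n h1]
  · refine key (2, i) (3, i - 1) (3, i + 1) (by simp) (by simp) (by simp [h3]) ?_
    rintro ⟨y, j⟩; simp [cn_adj n h1]
  · refine key (0, i) (2, i) (1, i + 1) (by simp) (by simp) (by simp) ?_
    rintro ⟨y, j⟩; simp [cn_adj n h1]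
  · refine key (0, i) (1, i) (2, i) (by simp) (by simp) (by simp) ?_
    rintro ⟨y, j⟩; simp [cn_adj n h1]

open scoped Classical in
/-- For `n ≥ 3`, the graph `Γ_{C_n}` is cubic and its automorphism group is isomorphic
to the cyclic group of order `n`, generated by the automorphism `(x,i) ↦ (x,i+1)`. -/
theorem cnGraph_isRegular_and_aut (n : ℕ) [NeZero n] (hn : 3 ≤ n) :
    (cnGraph n).IsRegularOfDegree 3 ∧
    ∃ ρ : cnGraph n ≃g cnGraph n,
      (∀ v : Fin 6 × ZMod n, ρ v = (v.1, v.2 + 1)) ∧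
      Subgroup.zpowers ρ = ⊤ ∧
      Nonempty ((cnGraph n ≃g cnGraph n) ≃* Multiplicative (ZMod n)) := by
  have h1 : (1 : ZMod n) ≠ 0 := by
    intro h
    have := (ZMod.natCast_eq_zero_iff 1 n).1 (by exact_mod_cast h)
    have := Nat.le_of_dvd (by norm_num) this
    omega
  have h2 : (2 : ZMod n) ≠ 0 := by
    intro h
    have := (ZMod.natCast_eq_zero_iff 2 n).1 (by exact_mod_cast h)
    have := Nat.le_of_dvd (by norm_num) this
    omega
  refine ⟨cn_reg n h1 h2, cnRot n h1 1, fun v => rfl, ?_, ⟨(cnEquiv n h1 h2).symm⟩⟩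
  rw [eq_top_iff]
  rintro φ -
  obtain ⟨k, rfl⟩ := cn_aut_eq n h1 h2 φ
  rw [Subgroup.mem_zpowers_iff]
  refine ⟨(k.val : ℤ), ?_⟩
  change (cnEquiv n h1 h2 (Multiplicative.ofAdd 1)) ^ _ = cnEquiv n h1 h2 (Multiplicative.ofAdd k)
  rw [← map_zpow, ← ofAdd_zsmul]
  simp
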